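/- Fix a real number c with 0 < c < 1. There exists a unique ξ∧ ∈ [δ₂,∞) with td(ξ∧) = 0; this ξ∧ satisfies ξ∧ < β₃ and ψ₄(t,ξ∧) ≥ 0 for all t ∈ [−1,1]; moreover, for every ξ ≥ 0 such that ψ₄(t,ξ) ≥ 0 for all t ∈ [−1,1], sup over t ∈ [−1,1] of |ψ₄(t,ξ)| is at least sup over t ∈ [−1,1] of |ψ₄(t,ξ∧)|; i.e., ξ∧ induces the optimal outer quartic G² approximant. -/

import Mathlib

noncomputable def alpha1 (c : ℝ) : ℝ := -(Real.sqrt (1 - c^2)/2) * (Real.sqrt (3 + c^2) + c)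
noncomputable def alpha2 (c : ℝ) : ℝ := (Real.sqrt (1 - c^2)/2) * (Real.sqrt (3 + c^2) - c)
noncomputable def beta1 (c : ℝ) : ℝ :=
  (c*Real.sqrt (1 - c^2) - Real.sqrt (3 + 8*c + 6*c^2 - c^4))/2
noncomputable def beta2 (c : ℝ) : ℝ :=
  (c*Real.sqrt (1 - c^2) - Real.sqrt (3 - 8*c + 6*c^2 - c^4))/2
noncomputable def beta3 (c : ℝ) : ℝ :=
  (c*Real.sqrt (1 - c^2) + Real.sqrt (3 - 8*c + 6*c^2 - c^4))/2
noncomputable def beta4 (c : ℝ) : ℝ :=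
  (c*Real.sqrt (1 - c^2) + Real.sqrt (3 + 8*c + 6*c^2 - c^4))/2

/-- Simplified radial error of the quartic G² Bézier approximant of the unit circular arc. -/
noncomputable def psi4 (c t ξ : ℝ) : ℝ :=
  ((t^2 - 1)^3/(64*c^2)) *
    (16*(ξ - alpha1 c)^2*(ξ - alpha2 c)^2*t^2
      - 16*(ξ - beta1 c)*(ξ - beta2 c)*(ξ - beta3 c)*(ξ - beta4 c))

noncomputable def delta2 (c : ℝ) : ℝ :=
  (-2*c + Real.sqrt (9 - 2*c^2 - 3*c^4))/(6*Real.sqrt (1 - c^2))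

/-- `td(ξ)` equals the third derivative at `t = 1` of the quartic G² radial error `ψ₄(·,ξ)`. -/
noncomputable def td (c ξ : ℝ) : ℝ :=
  (48*Real.sqrt (1 - c^2)/c)*ξ^3 + 48*ξ^2
    - 12*Real.sqrt (1 - c^2)*(3/c + c)*ξ + 12*(1 - c^2)

/-- Sup over `t ∈ [−1,1]` of `|f t|`. -/
noncomputable def errSup (f : ℝ → ℝ) : ℝ :=
  sSup ((fun t => |f t|) '' Set.Icc (-1 : ℝ) 1)

/-- Normalized cubic. -/
noncomputable def GG (c y : ℝ) : ℝ := 4*(1-c^2)*y^3 + 4*c*y^2 - (3+c^2)*y + c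

noncomputable def KK (c x y : ℝ) : ℝ := 4*(1-c^2)*(x^2+x*y+y^2) + 4*c*(x+y) - (3+c^2)

lemma GG_sub (c x y : ℝ) : GG c x - GG c y = (x-y) * KK c x y := by
  unfold GG KK; ring

lemma KK_mono (c x x' y : ℝ) (hc0 : 0 < c) (hc1 : c < 1) (hx : 0 ≤ x) (hy : 0 ≤ y)
    (h : x ≤ x') : KK c x y ≤ KK c x' y := by
  have : KK c x' y - KK c x y = (x'-x) * (4*(1-c^2)*(x'+x+y) + 4*c) := by
    unfold KK; ring
  have h1 : 0 ≤ 1 - c^2 := by nlinarith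
  have : 0 ≤ (x'-x) * (4*(1-c^2)*(x'+x+y) + 4*c) := by
    apply mul_nonneg (by linarith)
    have : 0 ≤ 4*(1-c^2)*(x'+x+y) := mul_nonneg (by linarith) (by linarith)
    linarith
  linarith

lemma GG_half (c : ℝ) (hc0 : 0 < c) (hc1 : c < 1) : GG c (c/2) < 0 := by
  have : GG c (c/2) = - (c * (1-c^2)^2/2) := by unfold GG; ring
  have h1 : 0 < 1 - c^2 := by nlinarith
  rw [this]
  have : 0 < c * (1-c^2)^2/2 := by positivity
  linarith

/-- y ≥ d root implies y > c/2 -/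
lemma root_gt (c d y : ℝ) (hc0 : 0 < c) (hc1 : c < 1) (hd0 : 0 ≤ d)
    (hd : 12*(1-c^2)*d^2 + 8*c*d - (3+c^2) = 0) (hy : d ≤ y) (h0 : 0 ≤ GG c y) : c/2 < y := by
  by_contra hcon
  push Not at hcon
  have h := GG_half c hc0 hc1
  have h2 := GG_sub c (c/2) y
  have h3 := KK_mono c d (c/2) y hc0 hc1 hd0 (by linarith) (by linarith)
  have h4 := KK_mono c d y d hc0 hc1 hd0 hd0 hy
  have h5 : KK c d d = 0 := by unfold KK; linarith
  have h6 : KK c y d = KK c d y := by unfold KK; ring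
  have : 0 ≤ (c/2-y) * KK c (c/2) y := mul_nonneg (by linarith) (by linarith)
  linarith

lemma KK_pos (c y x : ℝ) (hc0 : 0 < c) (hc1 : c < 1) (hy : c/2 < y) (h0 : GG c y = 0)
    (hx : c/2 ≤ x) : 0 < KK c x y := by
  have h := GG_half c hc0 hc1
  have h2 := GG_sub c (c/2) y
  have h3 := KK_mono c (c/2) x y hc0 hc1 (by linarith) (by linarith) hx
  by_contra hcon
  have : 0 ≤ (c/2-y) * KK c (c/2) y := mul_nonneg_of_nonpos_of_nonpos (by linarith) (by linarith)
  linarith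

/-- upper bound -/
lemma le_root (c y x : ℝ) (hc0 : 0 < c) (hc1 : c < 1) (hy : c/2 < y) (h0 : GG c y = 0)
    (hx : GG c x ≤ 0) : x ≤ y := by
  by_contra hcon
  push Not at hcon
  have h1 := KK_pos c y x hc0 hc1 hy h0 (by linarith)
  have h2 := GG_sub c x y
  have := mul_pos (sub_pos.2 hcon) h1
  linarith

lemma refl_nonneg (c y : ℝ) (hc0 : 0 < c) (hc1 : c < 1) (hy : c/2 < y) (h0 : GG c y = 0) :
    0 ≤ GG c (c - y) := by
  have h1 : 0 < 1 - c^2 := by nlinarith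
  obtain ⟨v, rfl⟩ : ∃ v, y = c/2 + v := ⟨y - c/2, by ring⟩
  have hv : 0 < v := by linarith
  have e1 : GG c (c/2+v) = c*(-(1-c^2)^2/2 + v^2*(6*(1-c^2)+4)) + v*((1-c^2)*(4*v^2-3*(1-c^2))) := by
    unfold GG; ring
  have e2 : GG c (c-(c/2+v)) = c*(-(1-c^2)^2/2 + v^2*(6*(1-c^2)+4)) - v*((1-c^2)*(4*v^2-3*(1-c^2))) := by
    unfold GG; ring
  rw [e2]
  rw [e1] at h0
  by_cases hs : 4*v^2 ≤ 3*(1-c^2)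
  · have : 0 ≤ v*((1-c^2)*(3*(1-c^2)-4*v^2)) :=
      mul_nonneg hv.le (mul_nonneg h1.le (by linarith))
    linarith
  · exfalso
    push Not at hs
    have a : 0 < v*((1-c^2)*(4*v^2-3*(1-c^2))) := mul_pos hv (mul_pos h1 (by linarith))
    have b : 0 < c*(-(1-c^2)^2/2 + v^2*(6*(1-c^2)+4)) := by
      apply mul_pos hc0
      nlinarith [sq_nonneg c]
    linarith

lemma ge_refl (c y x : ℝ) (hc0 : 0 < c) (hc1 : c < 1) (hy : c/2 < y) (h0 : GG c y = 0)
    (hx0 : 0 ≤ x) (hx : GG c x ≤ 0) : c - y ≤ x := by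
  by_contra hcon
  push Not at hcon
  have h := GG_half c hc0 hc1
  have h1 := refl_nonneg c y hc0 hc1 hy h0
  have e1 := GG_sub c x (c-y)
  have e2 := GG_sub c (c/2) (c-y)
  have m := KK_mono c x (c/2) (c-y) hc0 hc1 hx0 (by linarith) (by linarith)
  have p1 : 0 ≤ KK c x (c-y) := by
    by_contra hk
    have := mul_pos_of_neg_of_neg (sub_neg.2 hcon) (not_le.1 hk)
    linarith
  have : 0 ≤ (c/2-(c-y)) * KK c (c/2) (c-y) := mul_nonneg (by linarith) (by linarith)
  linarith

lemma exists_root (c d : ℝ) (hc0 : 0 < c) (hc1 : c < 1) (hd0 : 0 ≤ d)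
    (hd : 12*(1-c^2)*d^2 + 8*c*d - (3+c^2) = 0) : ∃ y, d ≤ y ∧ GG c y = 0 := by
  have h1 : 0 < 1 - c^2 := by nlinarith
  have hlow : GG c d ≤ 0 := by
    by_contra hcon
    push Not at hcon
    have h := GG_half c hc0 hc1
    have e : GG c (c/2) - GG c d = (c/2-d)^2*(4*(1-c^2)*(c/2+2*d)+4*c) 
       + (c/2-d)*(12*(1-c^2)*d^2 + 8*c*d - (3+c^2)) := by
      unfold GG; ring
    have : 0 ≤ (c/2-d)^2*(4*(1-c^2)*(c/2+2*d)+4*c) := by positivity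
    rw [hd] at e
    linarith
  have hd1 : d ≤ 1/c := by
    rw [le_div_iff₀ hc0]
    nlinarith [sq_nonneg d]
  have hup : 0 ≤ GG c (1/c) := by
    have : GG c (1/c) = (4*(1-c^2)/c^3) + (1-c^2)/c + c := by
      unfold GG; field_simp; ring
    rw [this]; positivity
  have hcont : ContinuousOn (GG c) (Set.Icc d (1/c)) := by
    unfold GG; fun_prop
  obtain ⟨y, hy, hy0⟩ := intermediate_value_Icc hd1 hcont ⟨hlow, hup⟩
  exact ⟨y, hy.1, hy0⟩

noncomputable def ss (c : ℝ) : ℝ := Real.sqrt (1 - c^2)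

lemma td_eq (c y : ℝ) (hc0 : 0 < c) (hc1 : c < 1) :
    td c (ss c * y) = 12*(1-c^2)/c * GG c y := by
  have h1 : 0 < 1 - c^2 := by nlinarith
  have hs : ss c ^2 = 1 - c^2 := Real.sq_sqrt h1.le
  have e : td c (ss c * y) = (48*ss c/c)*(ss c * y)^3 + 48*(ss c * y)^2
    - 12*ss c*(3/c + c)*(ss c * y) + 12*(1 - c^2) := rfl
  have e2 : (48*ss c/c)*(ss c * y)^3 + 48*(ss c * y)^2
    - 12*ss c*(3/c + c)*(ss c * y) + 12*(1 - c^2) =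
     48/c*((ss c)^2)^2*y^3 + 48*(ss c)^2*y^2 - 12*(ss c)^2*(3/c+c)*y + 12*(1-c^2) := by ring
  rw [e, e2, hs]
  unfold GG
  field_simp
  ring

/-- Reduced A. -/
noncomputable def AA (c y : ℝ) : ℝ := ((1-c^2)*(y^2 + c*y - 3/4))^2

/-- Reduced B. -/
noncomputable def BB (c y : ℝ) : ℝ :=
  ((1-c^2)*(y^2 - c*y) - (1+c)*(3+5*c)/4) * ((1-c^2)*(y^2 - c*y) - (1-c)*(3-5*c)/4)

lemma AB (c y : ℝ) : AA c y - BB c y = c*(1-c^2)*GG c y := by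
  unfold AA BB GG; ring

lemma beta23 (c y : ℝ) (hc0 : 0 < c) (hc1 : c < 1) :
    (ss c * y - beta2 c) * (ss c * y - beta3 c) = (1-c^2)*(y^2 - c*y) - (1-c)*(3-5*c)/4 := by
  have h1 : 0 < 1 - c^2 := by nlinarith
  have hs : ss c ^2 = 1 - c^2 := Real.sq_sqrt h1.le
  have h2 : 0 ≤ 3 - 8*c + 6*c^2 - c^4 := by
    have : 3 - 8*c + 6*c^2 - c^4 = (1-c)^3*(3+c) := by ring
    rw [this]
    have : 0 < 1 - c := by linarith
    positivity
  have hr := Real.sq_sqrt h2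
  have e : (ss c * y - beta2 c) * (ss c * y - beta3 c) = ss c^2*(y^2-c*y) + c^2*ss c^2/4 -
    Real.sqrt (3 - 8*c + 6*c^2 - c^4)^2/4 := by
    unfold beta2 beta3 ss; ring
  rw [e, hr, hs]; ring

lemma beta14 (c y : ℝ) (hc0 : 0 < c) (hc1 : c < 1) :
    (ss c * y - beta1 c) * (ss c * y - beta4 c) = (1-c^2)*(y^2 - c*y) - (1+c)*(3+5*c)/4 := by
  have h1 : 0 < 1 - c^2 := by nlinarith
  have hs : ss c ^2 = 1 - c^2 := Real.sq_sqrt h1.le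
  have h2 : 0 ≤ 3 + 8*c + 6*c^2 - c^4 := by
    have : 3 + 8*c + 6*c^2 - c^4 = (1+c)^3*(3-c) := by ring
    rw [this]
    have : 0 < 3 - c := by linarith
    positivity
  have hr := Real.sq_sqrt h2
  have e : (ss c * y - beta1 c) * (ss c * y - beta4 c) = ss c^2*(y^2-c*y) + c^2*ss c^2/4 -
    Real.sqrt (3 + 8*c + 6*c^2 - c^4)^2/4 := by
    unfold beta1 beta4 ss; ring
  rw [e, hr, hs]; ring

lemma alpha12 (c y : ℝ) (hc0 : 0 < c) (hc1 : c < 1) :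
    (ss c * y - alpha1 c) * (ss c * y - alpha2 c) = (1-c^2)*(y^2 + c*y - 3/4) := by
  have h1 : 0 < 1 - c^2 := by nlinarith
  have hs : ss c ^2 = 1 - c^2 := Real.sq_sqrt h1.le
  have hr := Real.sq_sqrt (show 0 ≤ 3 + c^2 by positivity)
  have e : (ss c * y - alpha1 c) * (ss c * y - alpha2 c) = ss c^2*(y^2+c*y) + c^2*ss c^2/4 -
    ss c^2 * Real.sqrt (3 + c^2)^2/4 := by
    unfold alpha1 alpha2 ss; ring
  rw [e, hr, hs]; ring

lemma psi_eq (c t y : ℝ) (hc0 : 0 < c) (hc1 : c < 1) :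
    psi4 c t (ss c * y) = (1-t^2)^3/(4*c^2) * (BB c y - AA c y * t^2) := by
  have e : psi4 c t (ss c * y) = ((t^2 - 1)^3/(64*c^2)) *
    (16*((ss c * y - alpha1 c)*(ss c * y - alpha2 c))^2*t^2
      - 16*(((ss c * y - beta1 c)*(ss c * y - beta4 c))*
        ((ss c * y - beta2 c)*(ss c * y - beta3 c)))) := by
    unfold psi4; ring
  rw [e, beta23 c y hc0 hc1, beta14 c y hc0 hc1, alpha12 c y hc0 hc1]
  unfold AA BB
  field_simp
  ring

lemma delta_prop (c : ℝ) (hc0 : 0 < c) (hc1 : c < 1) :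
    ∃ d, 0 ≤ d ∧ 12*(1-c^2)*d^2 + 8*c*d - (3+c^2) = 0 ∧ delta2 c = ss c * d := by
  have h1 : 0 < 1 - c^2 := by nlinarith
  have hs : ss c ^2 = 1 - c^2 := Real.sq_sqrt h1.le
  have hsp : 0 < ss c := Real.sqrt_pos.2 h1
  have hp : 4*c^2 ≤ 9 - 2*c^2 - 3*c^4 := by nlinarith [sq_nonneg c]
  have hr := Real.sq_sqrt (show 0 ≤ 9 - 2*c^2 - 3*c^4 by nlinarith [sq_nonneg c])
  refine ⟨(-2*c + Real.sqrt (9 - 2*c^2 - 3*c^4))/(6*(1-c^2)), ?_, ?_, ?_⟩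
  · apply div_nonneg _ (by linarith)
    have : 2*c ≤ Real.sqrt (9 - 2*c^2 - 3*c^4) := Real.le_sqrt_of_sq_le (by linarith)
    linarith
  · set r := Real.sqrt (9 - 2*c^2 - 3*c^4)
    have hne : (1-c^2) ≠ 0 := h1.ne'
    have : 12*(1-c^2)*((-2*c + r)/(6*(1-c^2)))^2 + 8*c*((-2*c + r)/(6*(1-c^2))) - (3+c^2)
      = (r^2 - 4*c^2 - 3*(1-c^2)*(3+c^2))/(3*(1-c^2)) := by
      field_simp; ring
    rw [this, hr, div_eq_zero_iff]; left; ring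
  · unfold delta2
    change _ / (6 * ss c) = _
    rw [← hs]
    field_simp

lemma ex_scale (c x : ℝ) (hc0 : 0 < c) (hc1 : c < 1) : ∃ y, x = ss c * y := by
  have h1 : 0 < 1 - c^2 := by nlinarith
  have hsp : 0 < ss c := Real.sqrt_pos.2 h1
  exact ⟨x / ss c, by field_simp⟩

lemma lt_beta3 (c y : ℝ) (hc0 : 0 < c) (hc1 : c < 1) (hy : c/2 < y) (h0 : GG c y = 0) :
    ss c * y < beta3 c := by
  have h1 : 0 < 1 - c^2 := by nlinarith
  have hsp : 0 < ss c := Real.sqrt_pos.2 h1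
  obtain ⟨b, hb⟩ := ex_scale c (beta3 c) hc0 hc1
  have hB : (1-c^2)*(b^2 - c*b) - (1-c)*(3-5*c)/4 = 0 := by
    rw [← beta23 c b hc0 hc1, ← hb]; ring
  have hbc : c/2 ≤ b := by
    have : ss c * (c/2) ≤ ss c * b := by
      rw [← hb]
      unfold beta3
      change _ ≤ (c * ss c + _)/2
      have := Real.sqrt_nonneg (3 - 8*c + 6*c^2 - c^4)
      linarith
    exact le_of_mul_le_mul_left this hsp
  have hBB : BB c b = 0 := by unfold BB; rw [hB]; ring
  have hAB := AB c b
  have hA : 0 < AA c b := by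
    have : 0 ≤ AA c b := by unfold AA; positivity
    rcases this.lt_or_eq with h | h
    · exact h
    · exfalso
      unfold AA at h
      have h2 : (1-c^2)*(b^2 + c*b - 3/4) = 0 := pow_eq_zero_iff (two_ne_zero) |>.1 h.symm
      have h3 : b^2 + c*b - 3/4 = 0 := by
        rcases mul_eq_zero.1 h2 with h | h
        · linarith
        · exact h
      have h4 : (1-c) * ((1+c)*(b^2 - c*b) - (3-5*c)/4) = 0 := by linarith
      have h5 : (1+c)*(b^2 - c*b) - (3-5*c)/4 = 0 := by
        rcases mul_eq_zero.1 h4 with h | h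
        · linarith
        · exact h
      have h6 : 2*c*((1+c)*b - 1) = 0 := by linear_combination (1+c)*h3 - h5
      have h7 : (1+c)*b - 1 = 0 := by
        rcases mul_eq_zero.1 h6 with h | h
        · linarith
        · exact h
      have h8 : (1-c)^2 = 0 := by
        linear_combination 4*(1+c)^2*h3 - (4*((1+c)*b+1) + 4*c*(1+c))*h7
      have : 0 < (1-c)^2 := by have : 0 < 1-c := by linarith
                               positivity
      linarith
  have hG : 0 < GG c b := by
    by_contra hcon
    have : c*(1-c^2)*GG c b ≤ 0 := mul_nonpos_of_nonneg_of_nonpos (by positivity) (by linarith)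
    linarith
  have hlt : y < b := by
    by_contra hcon
    push Not at hcon
    have := KK_pos c y b hc0 hc1 hy h0 hbc
    have e := GG_sub c b y
    have : (b-y)*KK c b y ≤ 0 := mul_nonpos_of_nonpos_of_nonneg (by linarith) this.le
    linarith
  rw [hb]
  exact mul_lt_mul_of_pos_left hlt hsp

theorem stmt_10 (c : ℝ) (hc0 : 0 < c) (hc1 : c < 1) :
    (∃! ξ : ℝ, ξ ∈ Set.Ici (delta2 c) ∧ td c ξ = 0) ∧
    ∀ ξ : ℝ, ξ ∈ Set.Ici (delta2 c) → td c ξ = 0 →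
      ξ < beta3 c ∧
      (∀ t ∈ Set.Icc (-1 : ℝ) 1, 0 ≤ psi4 c t ξ) ∧
      ∀ ξ' : ℝ, 0 ≤ ξ' → (∀ t ∈ Set.Icc (-1 : ℝ) 1, 0 ≤ psi4 c t ξ') →
        errSup (fun t => psi4 c t ξ) ≤ errSup (fun t => psi4 c t ξ') := by
  have h1 : 0 < 1 - c^2 := by nlinarith
  have hsp : 0 < ss c := Real.sqrt_pos.2 h1
  obtain ⟨d, hd0, hd, hde⟩ := delta_prop c hc0 hc1
  have key : ∀ y, ss c * y ∈ Set.Ici (delta2 c) → td c (ss c * y) = 0 → 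
      c/2 < y ∧ GG c y = 0 := by
    intro y hy ht
    rw [td_eq c y hc0 hc1] at ht
    have hG : GG c y = 0 := by
      rcases mul_eq_zero.1 ht with h | h
      · have : 0 < 12*(1-c^2)/c := by positivity
        linarith
      · exact h
    rw [Set.mem_Ici, hde] at hy
    have hdy := le_of_mul_le_mul_left hy hsp
    exact ⟨root_gt c d y hc0 hc1 hd0 hd hdy hG.ge, hG⟩
  constructor
  · obtain ⟨y, hy, hy0⟩ := exists_root c d hc0 hc1 hd0 hd
    have m : ss c * y ∈ Set.Ici (delta2 c) := by
      rw [Set.mem_Ici, hde]; exact mul_le_mul_of_nonneg_left hy hsp.le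
    have tz : td c (ss c * y) = 0 := by rw [td_eq c y hc0 hc1, hy0, mul_zero]
    refine ⟨ss c * y, ⟨m, tz⟩, ?_⟩
    rintro x ⟨hx, hx0⟩
    obtain ⟨z, rfl⟩ := ex_scale c x hc0 hc1
    obtain ⟨a1, a2⟩ := key z hx hx0
    obtain ⟨b1, b2⟩ := key y m tz
    have := le_root c y z hc0 hc1 b1 b2 a2.le
    have := le_root c z y hc0 hc1 a1 a2 b2.le
    congr 1
    linarith
  · intro ξ hξ hξ0
    obtain ⟨y, rfl⟩ := ex_scale c ξ hc0 hc1
    obtain ⟨hy, hG⟩ := key y hξ hξ0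
    have hb3 := lt_beta3 c y hc0 hc1 hy hG
    have hAB : AA c y = BB c y := by have := AB c y; rw [hG] at this; linarith
    have hA0 : 0 ≤ AA c y := by unfold AA; positivity
    have hpsi : ∀ t, psi4 c t (ss c * y) = (1-t^2)^4 * (AA c y/(4*c^2)) := by
      intro t
      rw [psi_eq c t y hc0 hc1, ← hAB]; ring
    refine ⟨hb3, ?_, ?_⟩
    · intro t ht
      rw [hpsi]
      positivity
    · intro ξ' hξ' hout
      obtain ⟨x, rfl⟩ := ex_scale c ξ' hc0 hc1
      have hx0 : 0 ≤ x := by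
        by_contra hcon
        have := mul_neg_of_pos_of_neg hsp (not_le.1 hcon)
        linarith
      have hGx : GG c x ≤ 0 := by
        by_contra hcon
        push Not at hcon
        have hABx : 0 < AA c x - BB c x := by rw [AB]; positivity
        have hAx : 0 ≤ AA c x := by unfold AA; positivity
        -- choose t² = u close to 1
        have hApos : 0 ≤ BB c x := by
          have := hout 0 (by simp)
          rw [psi_eq c 0 x hc0 hc1] at this
          by_contra hneg
          have h2 : (1-(0:ℝ)^2)^3/(4*c^2) > 0 := by norm_num; positivity
          have := mul_neg_of_pos_of_neg h2 (show BB c x - AA c x * 0^2 < 0 by linarith)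
          linarith
        have hA : 0 < AA c x := by linarith
        set u := (AA c x + BB c x)/(2*AA c x) with hu
        have hu0 : 0 ≤ u := by positivity
        have hu1 : u < 1 := by rw [hu, div_lt_one (by positivity)]; linarith
        have hAu : AA c x * u = (AA c x + BB c x)/2 := by rw [hu]; field_simp
        have hsq := Real.sq_sqrt hu0
        have hm : Real.sqrt u ∈ Set.Icc (-1:ℝ) 1 := by
          constructor
          · linarith [Real.sqrt_nonneg u]
          · exact Real.sqrt_le_iff.2 ⟨by norm_num, by linarith⟩
        have := hout _ hm
        rw [psi_eq c _ x hc0 hc1, hsq, hAu] at this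
        have p : 0 < (1-u)^3/(4*c^2) := by
          have : 0 < 1 - u := by linarith
          positivity
        have := mul_neg_of_pos_of_neg p (show BB c x - (AA c x + BB c x)/2 < 0 by linarith)
        linarith
      have hle := le_root c y x hc0 hc1 hy hG hGx
      have hge := ge_refl c y x hc0 hc1 hy hG hx0 hGx
      have hQ : (1-c^2)*(x^2-c*x) ≤ (1-c^2)*(y^2-c*y) := by
        apply mul_le_mul_of_nonneg_left _ h1.le
        have := mul_nonneg (sub_nonneg.2 hle) (sub_nonneg.2 hge)
        linarith
      have hQb : (1-c^2)*(y^2-c*y) ≤ (1-c)*(3-5*c)/4 := by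
        have e := beta23 c y hc0 hc1
        have hb2 : beta2 c ≤ ss c * y := by
          have a : ss c * (c/2) ≤ ss c * y := mul_le_mul_of_nonneg_left hy.le hsp.le
          have b : beta2 c ≤ ss c * (c/2) := by
            unfold beta2
            change (c * ss c - _)/2 ≤ _
            have := Real.sqrt_nonneg (3 - 8*c + 6*c^2 - c^4)
            linarith
          linarith
        have := mul_nonpos_of_nonneg_of_nonpos (sub_nonneg.2 hb2) (sub_neg.2 hb3).le
        linarith
      have hBle : BB c y ≤ BB c x := by
        unfold BB
        have hab : (1-c)*(3-5*c)/4 ≤ (1+c)*(3+5*c)/4 := by linarith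
        apply mul_le_mul_of_nonpos_of_nonpos <;> linarith
      have hl : errSup (fun t => psi4 c t (ss c * y)) ≤ BB c y/(4*c^2) := by
        unfold errSup
        apply csSup_le (Set.Nonempty.image _ ⟨0, by simp⟩)
        rintro _ ⟨t, ht, rfl⟩
        simp only
        rw [hpsi, ← hAB, abs_of_nonneg (by positivity)]
        have ht2 : t^2 ≤ 1 := by rw [sq_le_one_iff_abs_le_one]; exact abs_le.2 ht
        have : (1-t^2)^4 ≤ 1 := pow_le_one₀ (by linarith) (by linarith [sq_nonneg t])
        exact mul_le_of_le_one_left (by positivity) this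
      have hr : BB c x/(4*c^2) ≤ errSup (fun t => psi4 c t (ss c * x)) := by
        unfold errSup
        have hbd : BddAbove ((fun t => |psi4 c t (ss c * x)|) '' Set.Icc (-1 : ℝ) 1) := by
          apply (isCompact_Icc.image_of_continuousOn _).bddAbove
          unfold psi4
          fun_prop
        have hmem : |psi4 c 0 (ss c * x)| ∈ ((fun t => |psi4 c t (ss c * x)|) '' Set.Icc (-1 : ℝ) 1) :=
          ⟨0, by simp, rfl⟩
        refine le_trans ?_ (le_csSup hbd hmem)
        rw [psi_eq c 0 x hc0 hc1]
        refine le_trans (le_of_eq ?_) (le_abs_self _)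
        ring
      refine hl.trans (le_trans ?_ hr)
      exact div_le_div_of_nonneg_right hBle (by positivity)
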